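/- Let N ≥ 2, κ ∈ (0, 1/4], α₊ = 1 + √(1−4κ), q ≥ q_c = (2N+α₊)/(2N−4+α₊), and ℓ_{N,q} = (2/(q−1))(2q/(q−1) − N). Suppose ω : (0, π/2) → ℝ is twice continuously differentiable and satisfies −ω'' − (N−2)(cos θ/sin θ) ω' − ℓ_{N,q} ω − κ (cos θ)^{−2} ω + |ω|^{q−1} ω = 0 on (0, π/2), with ∫₀^{π/2} (ω'(θ)² + ω(θ)² (cos θ)^{−2} + |ω(θ)|^{q+1}) (sin θ)^{N−2} dθ < ∞, and suppose there exists a sequence of smooth functions ω_n compactly supported in (0, π/2) such that ∫₀^{π/2} ((ω − ω_n)'² + (ω − ω_n)² (cos θ)^{−2}) (sin θ)^{N−2} dθ → 0. Then ω ≡ 0. (This is the zonal form of the nonexistence of nontrivial finite-energy separable solutions in the supercritical range q ≥ q_c, i.e. part I of the classification of the set ℰ_κ.) -/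

import Mathlib

open Real MeasureTheory Filter

/-!
Let `k = N - 2` and `γ = α₊ / 2`, so that `γ (1 - γ) = κ` and `φ = cos ^ γ` is the ground state of
`-Δ' - κ cos⁻²`, with eigenvalue `γ (γ + k)`. The condition `q ≥ q_c` says exactly that `ℓ` does
not exceed this eigenvalue. In terms of `u = ω / φ`, the equation makes the flux
`φ² u u' sin ^ k = (ω ω' + γ tan ω²) sin ^ k` nondecreasing, its derivative being a sum of
nonnegative terms one of which is `|ω| ^ (q + 1) sin ^ k`.

A flux that is positive somewhere stays bounded below up to `θ = π / 2`, where the energy density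
then dominates a multiple of `1 / (π / 2 - θ)`. A flux that is negative somewhere forces
`|ω ω'| sin ^ k ≥ c > 0` near the pole `θ = 0`; there finite energy bounds `log |ω|`, and if `k ≥ 1`
the energy density dominates a multiple of `1 / θ`. If `k = 0` the pole is a genuine boundary point,
at which approximability gives `ω → 0`, while `ω²` decreases away from it. Hence the flux vanishes
identically, and so does `ω`.
-/

section Analysis

open Set Topology

lemma not_integrableOn_Ioo_of_div_abs_sub_le {E : ℝ → ℝ} {a b p c : ℝ} (hab : a < b)
    (hp : p ∈ Icc a b) (hc : 0 < c) (hE : ∀ t ∈ Ioo a b, c / |t - p| ≤ E t) :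
    ¬IntegrableOn E (Ioo a b) := by
  intro hint
  have hinv : IntegrableOn (fun t => (t - p)⁻¹) (Ioo a b) := by
    refine Integrable.mono' (hint.const_mul c⁻¹) (by fun_prop) ?_
    filter_upwards [ae_restrict_mem measurableSet_Ioo] with t ht
    rw [norm_inv, Real.norm_eq_abs, inv_mul_eq_div, le_div_iff₀ hc, inv_mul_eq_div]
    exact hE t ht
  rw [← intervalIntegrable_iff_integrableOn_Ioo_of_le hab.le, intervalIntegrable_sub_inv_iff,
    uIcc_of_le hab.le] at hinv
  exact hinv.elim hab.ne (· hp)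

lemma abs_sub_le_setIntegral_of_abs_deriv_le {s : Set ℝ} (hs : s.OrdConnected)
    {f f' B : ℝ → ℝ} (hf : ∀ t ∈ s, HasDerivAt f (f' t) t) (hB : IntegrableOn B s)
    (hfB : ∀ t ∈ s, |f' t| ≤ B t) {x y : ℝ} (hx : x ∈ s) (hy : y ∈ s) :
    |f x - f y| ≤ ∫ t in s, B t := by
  wlog hyx : y ≤ x generalizing x y
  · rw [abs_sub_comm]
    exact this hy hx (le_of_not_ge hyx)
  have hsub : Icc y x ⊆ s := hs.out hy hx
  have hIoo : Ioo y x ⊆ s := Ioo_subset_Icc_self.trans hsub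
  have hIoc : Ioc y x ⊆ s := Ioc_subset_Icc_self.trans hsub
  calc |f x - f y| ≤ ∫ t in y..x, B t := by
        refine norm_sub_le_integral_of_norm_deriv_le_of_le hyx
          (fun t ht => (hf t (hsub ht)).continuousAt.continuousWithinAt)
          (fun t ht => (hf t (hIoo ht)).differentiableAt.differentiableWithinAt)
          (.of_forall fun t ht => ?_)
          ((intervalIntegrable_iff_integrableOn_Ioc_of_le hyx).2 (hB.mono_set hIoc))
        rw [(hf t (hIoo ht)).deriv]
        exact hfB t (hIoo ht)
    _ = ∫ t in Ioc y x, B t := intervalIntegral.integral_of_le hyx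
    _ ≤ ∫ t in s, B t := by
        refine setIntegral_mono_set hB ?_ hIoc.eventuallyLE
        filter_upwards [ae_restrict_mem hs.measurableSet] with t ht
        exact (abs_nonneg _).trans (hfB t ht)

/-- The lower bound on `u u' w` converts the logarithmic derivative into the energy density:
`|u' / u| = u'² w / |u u' w| ≤ E / c`. -/
lemma abs_le_abs_mul_exp_of_le_abs_mul_deriv {s : Set ℝ} (hs : s.OrdConnected)
    {u u' w E : ℝ → ℝ} {c : ℝ} (hc : 0 < c) (hu : ∀ t ∈ s, HasDerivAt u (u' t) t)
    (hE : IntegrableOn E s) (huE : ∀ t ∈ s, u' t ^ 2 * w t ≤ E t)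
    (hflux : ∀ t ∈ s, c ≤ |u t * u' t| * w t) {x y : ℝ} (hx : x ∈ s) (hy : y ∈ s) :
    |u x| ≤ |u y| * exp ((∫ t in s, E t) / c) := by
  have hne : ∀ t ∈ s, u t ≠ 0 := by
    intro t ht h0
    have := hflux t ht
    simp only [h0, zero_mul, abs_zero] at this
    linarith
  have hlog_deriv : ∀ t ∈ s, |u' t / u t| ≤ E t / c := by
    intro t ht
    rw [abs_div, div_le_div_iff₀ (abs_pos.2 (hne t ht)) hc]
    calc |u' t| * c ≤ |u' t| * (|u t * u' t| * w t) := by gcongr; exact hflux t ht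
      _ = (u' t ^ 2 * w t) * |u t| := by rw [abs_mul, ← sq_abs (u' t)]; ring
      _ ≤ E t * |u t| := by gcongr; exact huE t ht
  have hlog := abs_sub_le_setIntegral_of_abs_deriv_le hs
    (fun t ht => (hu t ht).log (hne t ht)) (hE.div_const c) hlog_deriv hx hy
  rw [integral_div] at hlog
  rw [← exp_log_eq_abs (hne x hx), ← exp_log_eq_abs (hne y hy), ← exp_add, exp_le_exp]
  linarith [le_abs_self (log (u x) - log (u y))]

lemma sub_mul_sq_le_setIntegral {v E : ℝ → ℝ} {a b s : ℝ} (hs : s ∈ Ioo a b)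
    (hv : ∀ t ∈ Ioo a b, DifferentiableAt ℝ v t) (hE : IntegrableOn E (Ioo a b))
    (hvE : ∀ t ∈ Ioo a b, deriv v t ^ 2 + v t ^ 2 ≤ E t) :
    (b - a) * v s ^ 2 ≤ (1 + (b - a)) * ∫ t in Ioo a b, E t := by
  have hab : 0 ≤ b - a := sub_nonneg.2 (hs.1.trans hs.2).le
  have hosc : ∀ t ∈ Ioo a b, v s ^ 2 ≤ E t + ∫ r in Ioo a b, E r := by
    intro t ht
    have hderiv_le : ∀ r ∈ Ioo a b, |2 * v r * deriv v r| ≤ E r := fun r hr =>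
      abs_le.2 ⟨by nlinarith [hvE r hr, sq_nonneg (v r + deriv v r)],
        by nlinarith [hvE r hr, sq_nonneg (v r - deriv v r)]⟩
    have hsub := abs_sub_le_setIntegral_of_abs_deriv_le ordConnected_Ioo
      (fun r hr => by simpa using (hv r hr).hasDerivAt.fun_pow 2) hE hderiv_le hs ht
    linarith [le_abs_self (v s ^ 2 - v t ^ 2), hvE t ht, sq_nonneg (deriv v t)]
  have hconst : ∀ c : ℝ, ∫ _ in Ioo a b, c = (b - a) * c := fun c => by
    rw [setIntegral_const, Real.volume_real_Ioo_of_le (sub_nonneg.1 hab), smul_eq_mul]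
  calc (b - a) * v s ^ 2 = ∫ _ in Ioo a b, v s ^ 2 := (hconst _).symm
    _ ≤ ∫ t in Ioo a b, (E t + ∫ r in Ioo a b, E r) :=
        setIntegral_mono_on (by simp) (hE.add (by simp)) measurableSet_Ioo hosc
    _ = (1 + (b - a)) * ∫ t in Ioo a b, E t := by
        rw [integral_add hE (by simp), hconst]
        ring

lemma exists_nonneg_mul_deriv_of_tendsto_sq_zero {u : ℝ → ℝ} {a b : ℝ} (hab : a < b)
    (hu : ∀ t ∈ Ioc a b, DifferentiableAt ℝ u t)
    (hlim : Tendsto (fun t => u t ^ 2) (𝓝[>] a) (𝓝 0)) :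
    ∃ t ∈ Ioc a b, 0 ≤ u t * deriv u t := by
  by_contra! hneg
  have hanti : AntitoneOn (fun t => u t ^ 2) (Ioc a b) := by
    refine antitoneOn_of_hasDerivWithinAt_nonpos (f' := fun t => 2 * (u t * deriv u t))
      (convex_Ioc a b) (fun t ht => ((hu t ht).fun_pow 2).continuousAt.continuousWithinAt)
      (fun t ht => ?_) (fun t ht => by linarith [hneg t (interior_subset ht)])
    exact (((hu t (interior_subset ht)).hasDerivAt.fun_pow 2).congr_deriv
      (by push_cast; ring)).hasDerivWithinAt
  have hb : b ∈ Ioc a b := right_mem_Ioc.2 hab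
  have hsq_le : u b ^ 2 ≤ 0 := by
    refine ge_of_tendsto hlim ?_
    filter_upwards [Ioc_mem_nhdsGT hab] with t ht
    exact hanti ht hb ht.2
  have hub : u b = 0 := sq_nonpos_iff _ |>.1 hsq_le
  simpa [hub] using hneg b hb

end Analysis

section Parameters

lemma hardyExponent_mul_one_sub {κ : ℝ} (hκ : κ ≤ 1 / 4) :
    (1 + √(1 - 4 * κ)) / 2 * (1 - (1 + √(1 - 4 * κ)) / 2) = κ := by
  linear_combination -(Real.sq_sqrt (show 0 ≤ 1 - 4 * κ by linarith)) / 4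

lemma ell_le_eigenvalue_of_criticalExponent_le {N α q : ℝ} (hN : 2 ≤ N) (hα : 0 < α)
    (hq : (2 * N + α) / (2 * N - 4 + α) ≤ q) :
    2 / (q - 1) * (2 * q / (q - 1) - N) ≤ α / 2 * (α / 2 + (N - 2)) := by
  rw [div_le_iff₀ (by linarith)] at hq
  have hq1 : 0 < q - 1 := by
    by_contra! h
    nlinarith
  set s := 2 / (q - 1) with hs
  have : 0 < s := by positivity
  have hs_le : s ≤ α / 2 + (N - 2) := by
    rw [hs, div_le_iff₀ hq1]
    linarith
  have hq_eq : 2 * q / (q - 1) = s + 2 := by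
    rw [hs]
    field_simp
    ring
  have hfactor : 0 ≤ (α / 2 + (N - 2) - s) * (α / 2 + s) :=
    mul_nonneg (sub_nonneg.2 hs_le) (by positivity)
  rw [hq_eq]
  linarith

lemma mul_abs_rpow_mul_self_pos {s : ℝ} (p : ℝ) (hs : s ≠ 0) : 0 < s * (|s| ^ p * s) := by
  have := abs_pos.2 hs
  calc 0 < |s| ^ p * s ^ 2 := by positivity
    _ = s * (|s| ^ p * s) := by ring

end Parameters

section HardyEnergy

open Set Topology

/-- The density on `(0, π / 2)` of the weighted `H¹`-energy of a zonal function `v` on the upper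
half-sphere of dimension `k + 1`, with the Hardy weight `cos⁻²` in the zeroth-order term and the
surface measure `sin ^ k`. -/
noncomputable def hardyEnergy (k : ℕ) (v : ℝ → ℝ) (θ : ℝ) : ℝ :=
  (deriv v θ ^ 2 + v θ ^ 2 / cos θ ^ 2) * sin θ ^ k

/-- Membership in the energy closure of the test functions on `(0, π / 2)`. Since the Bochner
integral of a non-integrable function is `0`, this is meaningful only for `ω` of finite energy. -/
def HardyApproximable (k : ℕ) (ω : ℝ → ℝ) : Prop :=
  ∃ ωn : ℕ → ℝ → ℝ,
    (∀ m : ℕ, ContDiff ℝ (⊤ : ℕ∞) (ωn m) ∧ HasCompactSupport (ωn m) ∧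
      tsupport (ωn m) ⊆ Ioo 0 (π / 2)) ∧
    Tendsto (fun m : ℕ => ∫ θ in Ioo 0 (π / 2), hardyEnergy k (fun t => ω t - ωn m t) θ)
      atTop (𝓝 0)

variable {k : ℕ} {v : ℝ → ℝ} {θ : ℝ}

lemma cos_pos_of_mem_Ioo_zero_pi_div_two (hθ : θ ∈ Ioo 0 (π / 2)) : 0 < cos θ :=
  cos_pos_of_mem_Ioo ⟨by linarith [hθ.1, pi_pos], hθ.2⟩

lemma sin_pos_of_mem_Ioo_zero_pi_div_two (hθ : θ ∈ Ioo 0 (π / 2)) : 0 < sin θ :=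
  sin_pos_of_pos_of_lt_pi hθ.1 (by linarith [hθ.2, pi_pos])

lemma hardyEnergy_nonneg (hθ : θ ∈ Ioo 0 (π / 2)) : 0 ≤ hardyEnergy k v θ := by
  have := sin_pos_of_mem_Ioo_zero_pi_div_two hθ
  unfold hardyEnergy
  positivity

lemma deriv_sq_mul_le_hardyEnergy (hθ : θ ∈ Ioo 0 (π / 2)) :
    deriv v θ ^ 2 * sin θ ^ k ≤ hardyEnergy k v θ := by
  have := sin_pos_of_mem_Ioo_zero_pi_div_two hθ
  unfold hardyEnergy
  gcongr
  exact le_add_of_nonneg_right (by positivity)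

lemma deriv_sq_add_sq_le_hardyEnergy_zero (hθ : θ ∈ Ioo 0 (π / 2)) :
    deriv v θ ^ 2 + v θ ^ 2 ≤ hardyEnergy 0 v θ := by
  have hcos := cos_pos_of_mem_Ioo_zero_pi_div_two hθ
  rw [hardyEnergy, pow_zero, mul_one]
  gcongr
  exact le_div_self (sq_nonneg _) (by positivity) (cos_sq_le_one θ)

lemma continuousOn_hardyEnergy {s : Set ℝ} (hv : ContinuousOn v s)
    (hv' : ContinuousOn (deriv v) s) (hs : s ⊆ Ioo 0 (π / 2)) :
    ContinuousOn (hardyEnergy k v) s :=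
  ((hv'.pow 2).add ((hv.pow 2).div (by fun_prop)
    fun _ ht => pow_ne_zero 2 (cos_pos_of_mem_Ioo_zero_pi_div_two (hs ht)).ne')).mul (by fun_prop)

lemma integrableOn_hardyEnergy_of_le {B : ℝ → ℝ} (hv : ContDiffOn ℝ 1 v (Ioo 0 (π / 2)))
    (hB : IntegrableOn B (Ioo 0 (π / 2))) (hle : ∀ t ∈ Ioo 0 (π / 2), hardyEnergy k v t ≤ B t) :
    IntegrableOn (hardyEnergy k v) (Ioo 0 (π / 2)) := by
  have hcont : ContinuousOn (hardyEnergy k v) (Ioo 0 (π / 2)) :=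
    continuousOn_hardyEnergy hv.continuousOn
      (hv.continuousOn_deriv_of_isOpen isOpen_Ioo le_rfl) subset_rfl
  refine Integrable.mono' hB (hcont.aestronglyMeasurable measurableSet_Ioo) ?_
  filter_upwards [ae_restrict_mem measurableSet_Ioo] with t ht
  rw [Real.norm_of_nonneg (hardyEnergy_nonneg ht)]
  exact hle t ht

lemma integrableOn_hardyEnergy_of_integrableOn_add {g : ℝ → ℝ}
    (hv : ContDiffOn ℝ 1 v (Ioo 0 (π / 2))) (hg : ∀ t ∈ Ioo 0 (π / 2), 0 ≤ g t)
    (hint : IntegrableOn (fun t => (deriv v t ^ 2 + v t ^ 2 / cos t ^ 2 + g t) * sin t ^ k)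
      (Ioo 0 (π / 2))) :
    IntegrableOn (hardyEnergy k v) (Ioo 0 (π / 2)) := by
  refine integrableOn_hardyEnergy_of_le hv hint fun t ht => ?_
  have := sin_pos_of_mem_Ioo_zero_pi_div_two ht
  exact mul_le_mul_of_nonneg_right (le_add_of_nonneg_right (hg t ht)) (by positivity)

lemma hardyEnergy_sub_le {ω u : ℝ → ℝ} (hθ : θ ∈ Ioo 0 (π / 2))
    (hω : DifferentiableAt ℝ ω θ) (hu : DifferentiableAt ℝ u θ) :
    hardyEnergy k (fun t => ω t - u t) θ ≤ 2 * (hardyEnergy k ω θ + hardyEnergy k u θ) := by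
  have hsub_sq : ∀ x y : ℝ, (x - y) ^ 2 ≤ 2 * x ^ 2 + 2 * y ^ 2 := fun x y => by
    linarith [sq_nonneg (x + y), sub_sq x y, add_sq x y]
  have := sin_pos_of_mem_Ioo_zero_pi_div_two hθ
  calc hardyEnergy k (fun t => ω t - u t) θ
      ≤ ((2 * deriv ω θ ^ 2 + 2 * deriv u θ ^ 2)
          + (2 * ω θ ^ 2 + 2 * u θ ^ 2) / cos θ ^ 2) * sin θ ^ k := by
        rw [hardyEnergy, deriv_fun_sub hω hu]
        gcongr <;> exact hsub_sq _ _
    _ = 2 * (hardyEnergy k ω θ + hardyEnergy k u θ) := by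
        unfold hardyEnergy
        ring

lemma integrable_hardyEnergy_of_hasCompactSupport {u : ℝ → ℝ} (hu : ContDiff ℝ 1 u)
    (hc : HasCompactSupport u) (hs : tsupport u ⊆ Ioo 0 (π / 2)) :
    Integrable (hardyEnergy k u) := by
  have hsupport : Function.support (hardyEnergy k u) ⊆ tsupport u := by
    refine Function.support_subset_iff'.2 fun t ht => ?_
    have hderiv : deriv u t = 0 :=
      Function.notMem_support.1 fun h => ht (support_deriv_subset h)
    simp [hardyEnergy, hderiv, image_eq_zero_of_notMem_tsupport ht]
  rw [← integrableOn_iff_integrable_of_support_subset hsupport]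
  exact (continuousOn_hardyEnergy hu.continuous.continuousOn
    (hu.continuous_deriv le_rfl).continuousOn hs).integrableOn_compact hc

lemma integrableOn_hardyEnergy_sub {ω u : ℝ → ℝ} (hω : ContDiffOn ℝ 1 ω (Ioo 0 (π / 2)))
    (hE : IntegrableOn (hardyEnergy k ω) (Ioo 0 (π / 2))) (hu : ContDiff ℝ 1 u)
    (hc : HasCompactSupport u) (hs : tsupport u ⊆ Ioo 0 (π / 2)) :
    IntegrableOn (hardyEnergy k fun t => ω t - u t) (Ioo 0 (π / 2)) := by
  have hu_int := integrable_hardyEnergy_of_hasCompactSupport (k := k) hu hc hs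
  refine integrableOn_hardyEnergy_of_le (hω.sub hu.contDiffOn)
    ((hE.add hu_int.integrableOn).const_mul 2) fun t ht => ?_
  exact hardyEnergy_sub_le ht
    ((hω.differentiableOn one_ne_zero).differentiableAt (isOpen_Ioo.mem_nhds ht))
    (hu.differentiable one_ne_zero t)

lemma sq_le_two_mul_integral_hardyEnergy_zero (hv : DifferentiableOn ℝ v (Ioo 0 (π / 2)))
    (hE : IntegrableOn (hardyEnergy 0 v) (Ioo 0 (π / 2))) (hθ : θ ∈ Ioo 0 (π / 2)) :
    v θ ^ 2 ≤ 2 * ∫ t in Ioo 0 (π / 2), hardyEnergy 0 v t := by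
  have hsob := sub_mul_sq_le_setIntegral hθ
    (fun t ht => hv.differentiableAt (isOpen_Ioo.mem_nhds ht)) hE
    (fun t ht => deriv_sq_add_sq_le_hardyEnergy_zero ht)
  have hnonneg : 0 ≤ ∫ t in Ioo 0 (π / 2), hardyEnergy 0 v t :=
    setIntegral_nonneg measurableSet_Ioo fun t ht => hardyEnergy_nonneg ht
  nlinarith [pi_gt_three]

lemma HardyApproximable.tendsto_sq_zero {ω : ℝ → ℝ} (h : HardyApproximable 0 ω)
    (hω : ContDiffOn ℝ 1 ω (Ioo 0 (π / 2)))
    (hE : IntegrableOn (hardyEnergy 0 ω) (Ioo 0 (π / 2))) :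
    Tendsto (fun t => ω t ^ 2) (𝓝[>] 0) (𝓝 0) := by
  obtain ⟨ωn, htest, hlim⟩ := h
  refine tendsto_order.2 ⟨fun a ha => .of_forall fun t => ha.trans_le (sq_nonneg _),
    fun ε hε => ?_⟩
  obtain ⟨m, hm⟩ := (hlim.eventually (gt_mem_nhds (half_pos hε))).exists
  obtain ⟨hsmooth, hcompact, hsupp⟩ := htest m
  have hC1 : ContDiff ℝ 1 (ωn m) := hsmooth.of_le (by norm_cast)
  have hvanish : ∀ᶠ t in 𝓝[>] (0 : ℝ), ωn m t = 0 :=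
    ((notMem_tsupport_iff_eventuallyEq.1 fun h0 => (hsupp h0).1.false).filter_mono
      nhdsWithin_le_nhds)
  filter_upwards [hvanish, Ioo_mem_nhdsGT (half_pos pi_pos)] with t ht0 ht
  have hsup := sq_le_two_mul_integral_hardyEnergy_zero
    ((hω.sub hC1.contDiffOn).differentiableOn one_ne_zero)
    (integrableOn_hardyEnergy_sub hω hE hC1 hcompact hsupp) ht
  rw [ht0, sub_zero] at hsup
  linarith

/-- On a bounded profile the flux bound `c ≤ |v v'| sin ^ k` yields `c² ≤ M² (v'² sin ^ k) sin ^ k`,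
and `sin ^ k ≤ θ` as soon as `k ≠ 0`. -/
lemma not_integrableOn_hardyEnergy_of_le_abs_mul_deriv {b c : ℝ} (hk : k ≠ 0)
    (hb : b ∈ Ioo 0 (π / 2)) (hc : 0 < c) (hv : ∀ t ∈ Ioc 0 b, DifferentiableAt ℝ v t)
    (hflux : ∀ t ∈ Ioc 0 b, c ≤ |v t * deriv v t| * sin t ^ k) :
    ¬IntegrableOn (hardyEnergy k v) (Ioc 0 b) := by
  intro hE
  have hsub : Ioc 0 b ⊆ Ioo 0 (π / 2) := fun t ht => ⟨ht.1, ht.2.trans_lt hb.2⟩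
  have hb_mem : b ∈ Ioc 0 b := right_mem_Ioc.2 hb.1
  set M := |v b| * exp ((∫ t in Ioc 0 b, hardyEnergy k v t) / c)
  have hbound : ∀ t ∈ Ioc 0 b, |v t| ≤ M := fun t ht =>
    abs_le_abs_mul_exp_of_le_abs_mul_deriv (w := fun t => sin t ^ k) ordConnected_Ioc hc
      (fun r hr => (hv r hr).hasDerivAt) hE
      (fun r hr => deriv_sq_mul_le_hardyEnergy (hsub hr)) hflux ht hb_mem
  have hvb : v b ≠ 0 := by
    intro h0
    have := hflux b hb_mem
    simp only [h0, zero_mul, abs_zero] at this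
    linarith
  have : 0 < M := (abs_pos.2 hvb).trans_le (hbound b hb_mem)
  refine not_integrableOn_Ioo_of_div_abs_sub_le (p := 0) (c := c ^ 2 / M ^ 2) hb.1
    (left_mem_Icc.2 hb.1.le) (by positivity) (fun t ht => ?_) (hE.mono_set Ioo_subset_Ioc_self)
  have ht' : t ∈ Ioc 0 b := Ioo_subset_Ioc_self ht
  have hsin := sin_pos_of_mem_Ioo_zero_pi_div_two (hsub ht')
  have hsin_pow : sin t ^ k ≤ t :=
    (pow_le_of_le_one hsin.le (sin_le_one t) hk).trans (sin_le ht.1.le)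
  rw [sub_zero, abs_of_pos ht.1, div_div, div_le_iff₀ (mul_pos (by positivity) ht.1)]
  calc c ^ 2 ≤ (|v t * deriv v t| * sin t ^ k) ^ 2 := by gcongr; exact hflux t ht'
    _ = deriv v t ^ 2 * sin t ^ k * (|v t| ^ 2 * sin t ^ k) := by
        rw [mul_pow, sq_abs, sq_abs]
        ring
    _ ≤ hardyEnergy k v t * (M ^ 2 * t) := by
        gcongr
        · exact hardyEnergy_nonneg (hsub ht')
        · exact deriv_sq_mul_le_hardyEnergy (hsub ht')
        · exact hbound t ht'

end HardyEnergy

section HardyFlux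

open Set Topology

/-- The flux `φ² u u' sin ^ k`, where `u = ω / φ` is the quotient of `ω` by `φ = cos ^ γ`. -/
noncomputable def hardyFlux (k : ℕ) (γ : ℝ) (ω : ℝ → ℝ) (θ : ℝ) : ℝ :=
  (ω θ * deriv ω θ + γ * tan θ * ω θ ^ 2) * sin θ ^ k

/-- The derivative of `hardyFlux` along a solution (`IsZonalHardySolution`) with parameters `ℓ` and
`f`, when the Hardy coefficient is `γ (1 - γ)`. -/
noncomputable def hardyDissipation (k : ℕ) (γ ℓ : ℝ) (f ω : ℝ → ℝ) (θ : ℝ) : ℝ :=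
  ((deriv ω θ + γ * tan θ * ω θ) ^ 2 + (γ * (γ + k) - ℓ) * ω θ ^ 2 + ω θ * f (ω θ)) * sin θ ^ k

/-- `C²` zonal solutions on `(0, π / 2)` of `-Δ'ω - ℓ ω - κ cos⁻² ω + f(ω) = 0`, where `Δ'` is the
Laplace–Beltrami operator of the sphere of dimension `k + 1`. -/
structure IsZonalHardySolution (k : ℕ) (κ ℓ : ℝ) (f ω : ℝ → ℝ) : Prop where
  contDiffOn : ContDiffOn ℝ 2 ω (Ioo 0 (π / 2))
  equation : ∀ θ ∈ Ioo 0 (π / 2),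
    -(deriv (deriv ω) θ) - k * (cos θ / sin θ) * deriv ω θ - ℓ * ω θ - κ / cos θ ^ 2 * ω θ
      + f (ω θ) = 0

variable {k : ℕ} {γ ℓ θ : ℝ} {f ω : ℝ → ℝ}

lemma hasDerivAt_sin_pow (hθ : sin θ ≠ 0) :
    HasDerivAt (fun t => sin t ^ k) (k * (cos θ / sin θ) * sin θ ^ k) θ := by
  refine ((hasDerivAt_sin θ).fun_pow k).congr_deriv ?_
  cases k with
  | zero => simp
  | succ n =>
    rw [Nat.add_sub_cancel, pow_succ]
    field_simp

lemma hardyFlux_le_cos_mul_hardyEnergy (hγ : 0 ≤ γ) (hθ : θ ∈ Ioo 0 (π / 2)) :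
    hardyFlux k γ ω θ ≤ (1 + γ) * (cos θ * hardyEnergy k ω θ) := by
  have hcos := cos_pos_of_mem_Ioo_zero_pi_div_two hθ
  have hsin := sin_pos_of_mem_Ioo_zero_pi_div_two hθ
  obtain ⟨z, hz⟩ : ∃ z, ω θ = cos θ * z := ⟨ω θ / cos θ, by field_simp⟩
  have hcross : z * deriv ω θ ≤ deriv ω θ ^ 2 + z ^ 2 := by
    nlinarith [sq_nonneg (z - deriv ω θ), sq_nonneg z, sq_nonneg (deriv ω θ)]
  have htan : γ * (sin θ * z ^ 2) ≤ γ * (deriv ω θ ^ 2 + z ^ 2) := by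
    gcongr
    nlinarith [sin_le_one θ, sq_nonneg z, sq_nonneg (deriv ω θ)]
  calc hardyFlux k γ ω θ
      = cos θ * (z * deriv ω θ + γ * (sin θ * z ^ 2)) * sin θ ^ k := by
        rw [hardyFlux, hz, tan_eq_sin_div_cos]
        field_simp
    _ ≤ cos θ * ((1 + γ) * (deriv ω θ ^ 2 + z ^ 2)) * sin θ ^ k := by
        gcongr
        linarith
    _ = (1 + γ) * (cos θ * hardyEnergy k ω θ) := by
        rw [hardyEnergy, hz]
        field_simp

lemma hardyFlux_nonpos (hγ : 0 ≤ γ) (hmono : MonotoneOn (hardyFlux k γ ω) (Ioo 0 (π / 2)))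
    (hE : IntegrableOn (hardyEnergy k ω) (Ioo 0 (π / 2))) (hθ : θ ∈ Ioo 0 (π / 2)) :
    hardyFlux k γ ω θ ≤ 0 := by
  by_contra! hpos
  have hsub : Ioo θ (π / 2) ⊆ Ioo 0 (π / 2) := Ioo_subset_Ioo_left hθ.1.le
  refine not_integrableOn_Ioo_of_div_abs_sub_le (c := hardyFlux k γ ω θ / (1 + γ)) hθ.2
    (right_mem_Icc.2 hθ.2.le) (by positivity) (fun t ht => ?_) (hE.mono_set hsub)
  have hdist : 0 < π / 2 - t := sub_pos.2 ht.2
  have hcos_le : cos t ≤ π / 2 - t := by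
    rw [← sin_pi_div_two_sub]
    exact sin_le hdist.le
  rw [abs_sub_comm, abs_of_pos hdist, div_div, div_le_iff₀ (by positivity)]
  calc hardyFlux k γ ω θ ≤ hardyFlux k γ ω t := hmono hθ (hsub ht) ht.1.le
    _ ≤ (1 + γ) * (cos t * hardyEnergy k ω t) := hardyFlux_le_cos_mul_hardyEnergy hγ (hsub ht)
    _ ≤ (1 + γ) * ((π / 2 - t) * hardyEnergy k ω t) := by
        gcongr
        exact hardyEnergy_nonneg (hsub ht)
    _ = hardyEnergy k ω t * ((1 + γ) * (π / 2 - t)) := by ring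

lemma mul_deriv_mul_le_hardyFlux (hγ : 0 ≤ γ) (hθ : θ ∈ Ioo 0 (π / 2)) :
    ω θ * deriv ω θ * sin θ ^ k ≤ hardyFlux k γ ω θ := by
  have hsin := sin_pos_of_mem_Ioo_zero_pi_div_two hθ
  have htan := tan_pos_of_pos_of_lt_pi_div_two hθ.1 hθ.2
  unfold hardyFlux
  gcongr
  exact le_add_of_nonneg_right (by positivity)

lemma hardyFlux_nonneg (hγ : 0 ≤ γ) (hω : ContDiffOn ℝ 1 ω (Ioo 0 (π / 2)))
    (hmono : MonotoneOn (hardyFlux k γ ω) (Ioo 0 (π / 2)))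
    (hE : IntegrableOn (hardyEnergy k ω) (Ioo 0 (π / 2)))
    (hApprox : k = 0 → HardyApproximable k ω) (hθ : θ ∈ Ioo 0 (π / 2)) :
    0 ≤ hardyFlux k γ ω θ := by
  by_contra! hneg
  have hsub : Ioc 0 θ ⊆ Ioo 0 (π / 2) := fun t ht => ⟨ht.1, ht.2.trans_lt hθ.2⟩
  have hdiff : ∀ t ∈ Ioc 0 θ, DifferentiableAt ℝ ω t := fun t ht =>
    (hω.differentiableOn one_ne_zero).differentiableAt (isOpen_Ioo.mem_nhds (hsub ht))
  have hflux : ∀ t ∈ Ioc 0 θ, ω t * deriv ω t * sin t ^ k ≤ hardyFlux k γ ω θ := fun t ht =>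
    (mul_deriv_mul_le_hardyFlux hγ (hsub ht)).trans (hmono (hsub ht) hθ ht.2)
  rcases eq_or_ne k 0 with rfl | hk
  · obtain ⟨t, ht, hnonneg⟩ :=
      exists_nonneg_mul_deriv_of_tendsto_sq_zero hθ.1 hdiff ((hApprox rfl).tendsto_sq_zero hω hE)
    have := hflux t ht
    rw [pow_zero, mul_one] at this
    linarith
  · refine not_integrableOn_hardyEnergy_of_le_abs_mul_deriv hk hθ (neg_pos.2 hneg) hdiff
      (fun t ht => ?_) (hE.mono_set hsub)
    have hsin := sin_pos_of_mem_Ioo_zero_pi_div_two (hsub ht)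
    rw [← abs_of_pos (pow_pos hsin k), ← abs_mul]
    exact (neg_le_neg (hflux t ht)).trans (neg_le_abs _)

lemma IsZonalHardySolution.hasDerivAt_hardyFlux (h : IsZonalHardySolution k (γ * (1 - γ)) ℓ f ω)
    (hθ : θ ∈ Ioo 0 (π / 2)) :
    HasDerivAt (hardyFlux k γ ω) (hardyDissipation k γ ℓ f ω θ) θ := by
  have hcos := cos_pos_of_mem_Ioo_zero_pi_div_two hθ
  have hsin := sin_pos_of_mem_Ioo_zero_pi_div_two hθ
  have hnhds := isOpen_Ioo.mem_nhds hθ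
  have hω : HasDerivAt ω (deriv ω θ) θ :=
    ((h.contDiffOn.differentiableOn two_ne_zero).differentiableAt hnhds).hasDerivAt
  have hω' : HasDerivAt (deriv ω) (deriv (deriv ω) θ) θ :=
    (((h.contDiffOn.deriv_of_isOpen (m := 1) isOpen_Ioo (by norm_num)).differentiableOn
      one_ne_zero).differentiableAt hnhds).hasDerivAt
  have hflux := ((hω.fun_mul hω').fun_add
    (((hasDerivAt_tan hcos.ne').const_mul γ).fun_mul (hω.fun_pow 2))).fun_mul
      (hasDerivAt_sin_pow (k := k) hsin.ne')
  refine hflux.congr_deriv ?_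
  have hsec : 1 / cos θ ^ 2 = 1 + tan θ ^ 2 := by
    rw [one_div, ← inv_one_add_tan_sq hcos.ne', inv_inv]
  have hcot : cos θ / sin θ * tan θ = 1 := by
    rw [tan_eq_sin_div_cos]
    field_simp
  have hODE := h.equation θ hθ
  rw [div_eq_mul_one_div (γ * (1 - γ)), hsec] at hODE
  rw [hsec, hardyDissipation]
  push_cast
  linear_combination (-ω θ * sin θ ^ k) * hODE + (γ * k * ω θ ^ 2 * sin θ ^ k) * hcot

lemma hardyDissipation_nonneg (hℓ : ℓ ≤ γ * (γ + k)) (hf : ∀ s ≠ 0, 0 < s * f s)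
    (hθ : θ ∈ Ioo 0 (π / 2)) : 0 ≤ hardyDissipation k γ ℓ f ω θ := by
  have hsin := sin_pos_of_mem_Ioo_zero_pi_div_two hθ
  have : 0 ≤ γ * (γ + k) - ℓ := sub_nonneg.2 hℓ
  have habs : 0 ≤ ω θ * f (ω θ) := by
    rcases eq_or_ne (ω θ) 0 with h0 | h0
    · simp [h0]
    · exact (hf _ h0).le
  unfold hardyDissipation
  positivity

lemma hardyDissipation_pos (hℓ : ℓ ≤ γ * (γ + k)) (hf : ∀ s ≠ 0, 0 < s * f s)
    (hθ : θ ∈ Ioo 0 (π / 2)) (hω : ω θ ≠ 0) : 0 < hardyDissipation k γ ℓ f ω θ := by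
  have hsin := sin_pos_of_mem_Ioo_zero_pi_div_two hθ
  have : 0 ≤ γ * (γ + k) - ℓ := sub_nonneg.2 hℓ
  have habs := hf _ hω
  unfold hardyDissipation
  positivity

lemma IsZonalHardySolution.monotoneOn_hardyFlux
    (h : IsZonalHardySolution k (γ * (1 - γ)) ℓ f ω) (hℓ : ℓ ≤ γ * (γ + k))
    (hf : ∀ s ≠ 0, 0 < s * f s) : MonotoneOn (hardyFlux k γ ω) (Ioo 0 (π / 2)) :=
  monotoneOn_of_hasDerivWithinAt_nonneg (convex_Ioo _ _)
    (fun _ ht => (h.hasDerivAt_hardyFlux ht).continuousAt.continuousWithinAt)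
    (fun _ ht => (h.hasDerivAt_hardyFlux (interior_subset ht)).hasDerivWithinAt)
    (fun _ ht => hardyDissipation_nonneg hℓ hf (interior_subset ht))

theorem supercritical_nonexistence_general (k : ℕ) (γ : ℝ) (hγ : 0 ≤ γ) (ℓ : ℝ)
    (hℓ : ℓ ≤ γ * (γ + k)) (f ω : ℝ → ℝ) (hf : ∀ s ≠ 0, 0 < s * f s)
    (h : IsZonalHardySolution k (γ * (1 - γ)) ℓ f ω)
    (hE : IntegrableOn (hardyEnergy k ω) (Ioo 0 (π / 2)))
    (hApprox : k = 0 → HardyApproximable k ω) :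
    ∀ θ ∈ Ioo 0 (π / 2), ω θ = 0 := by
  intro θ hθ
  have hmono := h.monotoneOn_hardyFlux hℓ hf
  have hflux : hardyFlux k γ ω =ᶠ[𝓝 θ] fun _ => 0 := by
    filter_upwards [isOpen_Ioo.mem_nhds hθ] with t ht
    exact (hardyFlux_nonpos hγ hmono hE ht).antisymm
      (hardyFlux_nonneg hγ (h.contDiffOn.of_le one_le_two) hmono hE hApprox ht)
  have hdiss : hardyDissipation k γ ℓ f ω θ = 0 :=
    (h.hasDerivAt_hardyFlux hθ).unique ((hasDerivAt_const θ 0).congr_of_eventuallyEq hflux)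
  by_contra hne
  exact (hardyDissipation_pos hℓ hf hθ hne).ne' hdiss

end HardyFlux

/-- nonexistence of nontrivial finite-energy separable solution profiles in
the supercritical range `q ≥ q_c`: if `ω` is a `C²` solution on `(0, π/2)` of the zonal
equation `-ω'' - (N-2)(cos θ/sin θ)ω' - ℓ_{N,q}ω - κ(cos θ)⁻²ω + |ω|^{q-1}ω = 0` with
finite energy, approximable in the weighted `H¹`-norm by smooth functions compactly
supported in `(0, π/2)`, then `ω ≡ 0`. -/
theorem supercritical_nonexistence (N : ℕ) (hN : 2 ≤ N) (κ : ℝ)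
    (hκ0 : 0 < κ) (hκ4 : κ ≤ 1/4) (α : ℝ) (hα : α = 1 + Real.sqrt (1 - 4*κ))
    (q : ℝ) (hq : (2*(N : ℝ) + α) / (2*(N : ℝ) - 4 + α) ≤ q)
    (ℓ : ℝ) (hℓ : ℓ = (2/(q-1)) * (2*q/(q-1) - (N : ℝ)))
    (ω : ℝ → ℝ) (hω : ContDiffOn ℝ 2 ω (Set.Ioo 0 (π/2)))
    (hODE : ∀ θ ∈ Set.Ioo 0 (π/2),
      -(deriv (deriv ω) θ) - ((N : ℝ) - 2) * (Real.cos θ / Real.sin θ) * deriv ω θ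
        - ℓ * ω θ - κ / (Real.cos θ)^2 * ω θ + |ω θ| ^ (q-1) * ω θ = 0)
    (hEnergy : MeasureTheory.IntegrableOn
      (fun θ => ((deriv ω θ)^2 + (ω θ)^2 / (Real.cos θ)^2 + |ω θ| ^ (q+1))
        * (Real.sin θ)^(N-2))
      (Set.Ioo 0 (π/2)) volume)
    (hApprox : ∃ ωn : ℕ → ℝ → ℝ,
      (∀ m : ℕ, ContDiff ℝ (⊤ : ℕ∞) (ωn m) ∧ HasCompactSupport (ωn m) ∧
        tsupport (ωn m) ⊆ Set.Ioo 0 (π/2)) ∧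
      Tendsto (fun m : ℕ =>
          ∫ θ in Set.Ioo 0 (π/2),
            ((deriv (fun t => ω t - ωn m t) θ)^2
              + (ω θ - ωn m θ)^2 / (Real.cos θ)^2) * (Real.sin θ)^(N-2))
        atTop (nhds 0)) :
    ∀ θ ∈ Set.Ioo 0 (π/2), ω θ = 0 := by
  have hα0 : 0 < α := by rw [hα]; positivity
  have hκ : α / 2 * (1 - α / 2) = κ := hα ▸ hardyExponent_mul_one_sub hκ4
  have hcast : ((N - 2 : ℕ) : ℝ) = N - 2 := by push_cast [hN]; ring
  have hℓ_le : ℓ ≤ α / 2 * (α / 2 + (N - 2 : ℕ)) := by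
    rw [hℓ, hcast]
    exact ell_le_eigenvalue_of_criticalExponent_le (by exact_mod_cast hN) hα0 hq
  have hE : IntegrableOn (hardyEnergy (N - 2) ω) (Set.Ioo 0 (π / 2)) :=
    integrableOn_hardyEnergy_of_integrableOn_add (hω.of_le one_le_two)
      (fun _ _ => by positivity) hEnergy
  exact supercritical_nonexistence_general (N - 2) (α / 2) (by positivity) ℓ hℓ_le
    (fun s => |s| ^ (q - 1) * s) ω (fun s hs => mul_abs_rpow_mul_self_pos (q - 1) hs)
    ⟨hω, by rwa [hκ, hcast]⟩ hE (fun _ => hApprox)
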